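/- Suppose β ∈ (0,1), and let z_⊕ ∈ (𝔷_0, ∞) be the unique point such that (α(z) − K)/ψ(α(z);z) − (𝔷_0 − K)/ψ(𝔷_0;z) is strictly positive for z ∈ (0, z_⊕) and strictly negative for z ∈ (z_⊕, ∞), where α(z) denotes the unique zero of F(·;z) in (min(z,𝔷_0), ∞). Then for any z > 0, the system of equations G(γ, ζ; z) = 0 and H(γ, ζ; z) = 0 has a solution (γ, ζ) with 𝔷_0 < γ < z < ζ if and only if z > z_⊕, in which case the solution with 𝔷_0 < γ < z < ζ is unique. -/

import Mathlib

/-!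
Write `φ a c y = ((a - 1) y - a K) y ^ (-c)`. Then `G(x, y; z) = g_z(y) - g_z(x)` with
`g_z = z ^ m φ n m - z ^ n φ m n`, and `H(x, y; z) = h_z(y) - c φ n m x` with
`h_z = A φ n m + B(z) φ m n` and `c = (1 - β) / (1 + β)`. The derivatives of `φ n m` and `φ m n`
share the factor `w(y) = (n - 1)(1 - m) y + n m K`, which is positive on `[𝔷_0, ∞)`. Hence
`φ n m` and `h_z` increase on `[𝔷_0, ∞)`, while `g_z` decreases on `[𝔷_0, z]` and increases
on `[z, ∞)`.

*Uniqueness.* If `γ` increases, `G = 0` forces `ζ` to decrease, and then `H` strictly decreases.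

*Existence.* Along the curve `G = 0`, parametrised by `γ ∈ [𝔷_0, z]`, the function `H` is
continuous. It is negative at the end `γ = ζ = z`, so a solution exists as soon as it is positive
at the other end `γ = 𝔷_0`, that is, when `F(ζ₀; z) > 0` for the `ζ₀ > z` with
`g_z(ζ₀) = g_z(𝔷_0)`; equivalently, when `α(z) < ζ₀`.

*The threshold.* At a zero `α` of `F(·; z)` one has the identity
`g_z(α) = (n - m) z ^ n (α - K) / (A α ^ n + B α ^ m)` (`gz_root`), and
`g_z(𝔷_0) = (n - m) z ^ n (𝔷_0 - K) / 𝔷_0 ^ n` (`gz_zzero`). So when `α(z) > z`, the sign of the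
difference defining `z_⊕` compares `g_z(α(z))` with `g_z(𝔷_0)`, hence `α(z)` with `ζ₀`. When
`α(z) ≤ z` that difference is negative because `(x - K) / x ^ n` decreases on `[𝔷_0, ∞)`.

*Excluding `z = z_⊕`.* A solution `(γ, ζ)` yields the strict inequalities `F(ζ; z) > 0` and
`g_z(ζ) < g_z(𝔷_0)`, which persist for `z'` slightly below `z` and make the difference negative
at `z'` (`diff_neg`); hence `z' ≥ z_⊕`, and `z > z_⊕`.
-/

open Set Filter Topology

noncomputable section

/-- The coefficient `A`. -/
def Acoef (n m beta : ℝ) : ℝ := (n * (1 - beta) - m * (1 + beta)) / ((n - m) * (1 + beta))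

/-- The coefficient `B(z)`. -/
def Bcoef (n m beta z : ℝ) : ℝ := 2 * n * beta * z ^ (n - m) / ((n - m) * (1 + beta))

/-- The minimal excessive function `ψ(·;z)` of the skew geometric Brownian motion. -/
def psi (n m beta z x : ℝ) : ℝ :=
  if x ≤ z then x ^ n else Acoef n m beta * x ^ n + Bcoef n m beta z * x ^ m

/-- The function `F(·;z)`. -/
def Ffun (n m beta K z x : ℝ) : ℝ :=
  ((n - 1) * x - n * K) * Acoef n m beta * x ^ (n - m)
    + ((m - 1) * x - m * K) * Bcoef n m beta z

/-- The critical point `𝔷_c = rK/(r-b)`. -/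
def zcrit (r b K : ℝ) : ℝ := r * K / (r - b)

/-- The critical point `𝔷_0 = nK/(n-1)`. -/
def zzero (n K : ℝ) : ℝ := n * K / (n - 1)

/-- The critical point `𝔷_β = nK/(n - (1+β)/(1-β))`. -/
def zbeta (n K beta : ℝ) : ℝ := n * K / (n - (1 + beta) / (1 - beta))

/-- The constant `𝔠`. -/
def gothC (n m beta : ℝ) : ℝ :=
  (-((n - 1) * (n * (1 - beta) - m * (1 + beta))) / (2 * m * (m - 1) * beta)) ^ ((1 : ℝ) / (n - m))

/-- The function `J(·;z)`. -/
def Jfun (n m beta K z x : ℝ) : ℝ :=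
  ((n - 1) * x - n * K) * Acoef n m beta * x ^ (-m)
    - ((m - 1) * x - m * K) * Acoef n m beta * z ^ (n - m) * x ^ (-n)
    - (n - m) * Acoef n m beta * (z - K) * z ^ (-m)

/-- The function `G(·,·;z)`. -/
def Gfun (n m K z x y : ℝ) : ℝ :=
  ((n - 1) * y - n * K) * z ^ m * y ^ (-m) - ((m - 1) * y - m * K) * z ^ n * y ^ (-n)
    - ((n - 1) * x - n * K) * z ^ m * x ^ (-m) + ((m - 1) * x - m * K) * z ^ n * x ^ (-n)

/-- The function `H(·,·;z)`. -/
def Hfun (n m beta K z x y : ℝ) : ℝ :=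
  y ^ (-n) * Ffun n m beta K z y
    - (1 - beta) / (1 + beta) * (((n - 1) * x - n * K) * x ^ (-m))

/-! ### The building blocks of `F`, `G` and `H` -/

/-- `φ a c y = ((a - 1) y - a K) y ^ (-c)`, the building block of `F`, `G` and `H`; it is used with
`(a, c) = (n, m)` and `(a, c) = (m, n)`. -/
def phi (K a c y : ℝ) : ℝ := ((a - 1) * y - a * K) * y ^ (-c)

/-- The function `g_z` with `G(x, y; z) = g_z(y) - g_z(x)`. -/
def gz (n m K z y : ℝ) : ℝ := z ^ m * phi K n m y - z ^ n * phi K m n y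

/-- The function `h_z`, equal to `y ^ (-n) F(y; z)` for `y > 0` (`hFun_eq`). -/
def hFun (n m beta K z y : ℝ) : ℝ :=
  Acoef n m beta * phi K n m y + Bcoef n m beta z * phi K m n y

lemma Gfun_eq (n m K z x y : ℝ) : Gfun n m K z x y = gz n m K z y - gz n m K z x := by
  unfold Gfun gz phi; ring

lemma hFun_eq {n m beta K z y : ℝ} (hy : 0 < y) :
    hFun n m beta K z y = y ^ (-n) * Ffun n m beta K z y := by
  unfold hFun Ffun phi
  have h : y ^ (-m) = y ^ (-n) * y ^ (n - m) := by
    rw [← Real.rpow_add hy]; congr 1; ring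
  rw [h]; ring

lemma Hfun_eq {n m beta K z x y : ℝ} (hy : 0 < y) :
    Hfun n m beta K z x y = hFun n m beta K z y - (1 - beta) / (1 + beta) * phi K n m x := by
  rw [hFun_eq hy]; rfl

lemma hFun_eq_zero {n m beta K z y : ℝ} (hy : 0 < y) (h : Ffun n m beta K z y = 0) :
    hFun n m beta K z y = 0 := by
  rw [hFun_eq hy, h, mul_zero]

lemma hasDerivAt_phi (K a c : ℝ) {y : ℝ} (hy : 0 < y) :
    HasDerivAt (phi K a c) (((a - 1) * (1 - c) * y + a * c * K) * y ^ (-c - 1)) y := by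
  have h1 : HasDerivAt (fun y : ℝ => (a - 1) * y - a * K) ((a - 1) * 1) y :=
    ((hasDerivAt_id y).const_mul (a - 1)).sub_const _
  have h2 := Real.hasDerivAt_rpow_const (x := y) (p := -c) (Or.inl hy.ne')
  refine (h1.mul h2).congr_deriv ?_
  have h3 : y ^ (-c) = y * y ^ (-c - 1) := by
    rw [Real.rpow_sub_one hy.ne']; field_simp
  rw [h3]; ring

lemma continuousOn_phi (K a c : ℝ) : ContinuousOn (phi K a c) (Ioi 0) := fun _ hy =>
  (hasDerivAt_phi K a c hy).continuousAt.continuousWithinAt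

section

variable {n m beta K z : ℝ}

lemma zzero_mul (hn : 1 < n) : (n - 1) * zzero n K = n * K := by
  have : n - 1 ≠ 0 := by linarith
  unfold zzero; field_simp

lemma zzero_pos (hn : 1 < n) (hK : 0 < K) : 0 < zzero n K :=
  div_pos (by positivity) (by linarith)

lemma lt_zzero (hn : 1 < n) (hK : 0 < K) : K < zzero n K := by
  unfold zzero; rw [lt_div_iff₀ (by linarith)]; nlinarith

/-- The common factor of the derivatives of `φ n m` and `φ m n`. -/
lemma w_pos (hn : 1 < n) (hm : m < 0) (hK : 0 < K) {y : ℝ} (hy : zzero n K ≤ y) :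
    0 < (n - 1) * (1 - m) * y + n * m * K := by
  have h1 : n * K ≤ (n - 1) * y := by
    rw [← zzero_mul hn]; exact mul_le_mul_of_nonneg_left hy (by linarith)
  have h2 : 0 < n * K := by positivity
  nlinarith

lemma phi_zzero (hn : 1 < n) : phi K n m (zzero n K) = 0 := by
  unfold phi; rw [zzero_mul hn]; ring

lemma Acoef_pos (hn : 1 < n) (hm : m < 0) (hb : 0 < beta) (hb2 : beta < 1) :
    0 < Acoef n m beta :=
  div_pos (by nlinarith) (mul_pos (by linarith) (by linarith))

lemma Bcoef_pos (hn : 1 < n) (hm : m < 0) (hb : 0 < beta) (hz : 0 < z) :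
    0 < Bcoef n m beta z := by
  have h1 : 0 < n - m := by linarith
  unfold Bcoef; positivity

/-- Continuity of `ψ(·; z)` at `z`. -/
lemma A_add_B (hn : 1 < n) (hm : m < 0) (hb : 0 < beta) (hz : 0 < z) :
    Bcoef n m beta z * z ^ m + Acoef n m beta * z ^ n = z ^ n := by
  have h1 : n - m ≠ 0 := by linarith
  have h2 : 1 + beta ≠ 0 := by linarith
  have h3 : z ^ (n - m) * z ^ m = z ^ n := by rw [← Real.rpow_add hz]; congr 1; ring
  have h4 : Bcoef n m beta z * z ^ m = 2 * n * beta / ((n - m) * (1 + beta)) * z ^ n := by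
    rw [← h3]; unfold Bcoef; ring
  rw [h4]; unfold Acoef; field_simp; ring

/-! ### Monotonicity -/

lemma phi_strictMonoOn (hn : 1 < n) (hm : m < 0) (hK : 0 < K) :
    StrictMonoOn (phi K n m) (Ici (zzero n K)) := by
  have h0 := zzero_pos hn hK
  refine strictMonoOn_of_deriv_pos (convex_Ici _)
    ((continuousOn_phi K n m).mono fun y hy => h0.trans_le hy) fun y hy => ?_
  rw [interior_Ici] at hy
  have hy0 : 0 < y := h0.trans hy
  rw [(hasDerivAt_phi K n m hy0).deriv]
  exact mul_pos (w_pos hn hm hK (le_of_lt hy)) (Real.rpow_pos_of_pos hy0 _)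

lemma hFun_strictMonoOn (hn : 1 < n) (hm : m < 0) (hK : 0 < K) (hb : 0 < beta) (hb2 : beta < 1)
    (hz0 : 0 < z) : StrictMonoOn (hFun n m beta K z) (Ici (zzero n K)) := by
  have h0 := zzero_pos hn hK
  have hd : ∀ y, 0 < y → HasDerivAt (hFun n m beta K z) _ y := fun y hy =>
    ((hasDerivAt_phi K n m hy).const_mul (Acoef n m beta)).add
      ((hasDerivAt_phi K m n hy).const_mul (Bcoef n m beta z))
  refine strictMonoOn_of_deriv_pos (convex_Ici _)
    (fun y hy => (hd y (h0.trans_le hy)).continuousAt.continuousWithinAt) fun y hy => ?_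
  rw [interior_Ici] at hy
  have hy0 : 0 < y := h0.trans hy
  rw [(hd y hy0).deriv]
  have hw := w_pos hn hm hK (le_of_lt hy)
  have e : (m - 1) * (1 - n) * y + m * n * K = (n - 1) * (1 - m) * y + n * m * K := by ring
  rw [e]
  have := Acoef_pos hn hm hb hb2
  have := Bcoef_pos hn hm hb hz0
  positivity

lemma hasDerivAt_gz (n m K z : ℝ) {y : ℝ} (hy : 0 < y) :
    HasDerivAt (gz n m K z) (((n - 1) * (1 - m) * y + n * m * K) *
      (z ^ m * y ^ (-m) - z ^ n * y ^ (-n)) / y) y := by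
  refine (((hasDerivAt_phi K n m hy).const_mul (z ^ m)).sub
      ((hasDerivAt_phi K m n hy).const_mul (z ^ n))).congr_deriv ?_
  rw [Real.rpow_sub_one hy.ne', Real.rpow_sub_one hy.ne']; ring

lemma continuousOn_gz (n m K z : ℝ) : ContinuousOn (gz n m K z) (Ioi 0) := fun _ hy =>
  (hasDerivAt_gz n m K z hy).continuousAt.continuousWithinAt

lemma rpow_mul_rpow_neg {y : ℝ} (hz0 : 0 < z) (hy : 0 < y) (a : ℝ) :
    z ^ a * y ^ (-a) = (z / y) ^ a := by
  rw [Real.div_rpow hz0.le hy.le, Real.rpow_neg hy.le]; rfl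

lemma gz_strictAntiOn (hn : 1 < n) (hm : m < 0) (hK : 0 < K) :
    StrictAntiOn (gz n m K z) (Icc (zzero n K) z) := by
  have h0 := zzero_pos hn hK
  refine strictAntiOn_of_deriv_neg (convex_Icc _ _)
    ((continuousOn_gz n m K z).mono fun y hy => h0.trans_le hy.1) fun y hy => ?_
  rw [interior_Icc] at hy
  have hy0 : 0 < y := h0.trans hy.1
  have hz0 : 0 < z := hy0.trans hy.2
  rw [(hasDerivAt_gz n m K z hy0).deriv, rpow_mul_rpow_neg hz0 hy0, rpow_mul_rpow_neg hz0 hy0]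
  have h1 : 1 < z / y := (one_lt_div hy0).2 hy.2
  have h2 := Real.rpow_lt_rpow_of_exponent_lt h1 (show m < n by linarith)
  exact div_neg_of_neg_of_pos (mul_neg_of_pos_of_neg (w_pos hn hm hK hy.1.le) (by linarith)) hy0

lemma gz_strictMonoOn (hn : 1 < n) (hm : m < 0) (hK : 0 < K) (hz0 : zzero n K ≤ z) :
    StrictMonoOn (gz n m K z) (Ici z) := by
  have h0 := (zzero_pos hn hK).trans_le hz0
  refine strictMonoOn_of_deriv_pos (convex_Ici _)
    ((continuousOn_gz n m K z).mono fun y hy => h0.trans_le hy) fun y hy => ?_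
  rw [interior_Ici] at hy
  have hy' : z < y := hy
  have hy0 : 0 < y := h0.trans hy
  rw [(hasDerivAt_gz n m K z hy0).deriv, rpow_mul_rpow_neg h0 hy0, rpow_mul_rpow_neg h0 hy0]
  have h1 : z / y < 1 := (div_lt_one hy0).2 hy
  have h2 := Real.rpow_lt_rpow_of_exponent_gt (div_pos h0 hy0) h1 (show m < n by linarith)
  exact div_pos (mul_pos (w_pos hn hm hK (hz0.trans hy'.le)) (by linarith)) hy0

lemma div_rpow_strictAntiOn (hn : 1 < n) (hK : 0 < K) :
    StrictAntiOn (fun x : ℝ => (x - K) / x ^ n) (Ici (zzero n K)) := by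
  have h0 := zzero_pos hn hK
  have hd : ∀ y : ℝ, 0 < y → HasDerivAt (fun x : ℝ => (x - K) / x ^ n) _ y := fun y hy =>
    ((hasDerivAt_id y).sub_const K).div (Real.hasDerivAt_rpow_const (Or.inl hy.ne'))
      (Real.rpow_pos_of_pos hy n).ne'
  refine strictAntiOn_of_deriv_neg (convex_Ici _)
    (fun y hy => (hd y (h0.trans_le hy)).continuousAt.continuousWithinAt) fun y hy => ?_
  rw [interior_Ici] at hy
  have hy' : zzero n K < y := hy
  have hy0 : 0 < y := h0.trans hy
  rw [(hd y hy0).deriv, Real.rpow_sub_one hy0.ne']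
  have hp := Real.rpow_pos_of_pos hy0 n
  refine div_neg_of_neg_of_pos ?_ (by positivity)
  have h1 : n * K < (n - 1) * y := by
    rw [← zzero_mul hn]; exact mul_lt_mul_of_pos_left hy' (by linarith)
  have e : 1 * y ^ n - (id y - K) * (n * (y ^ n / y)) = (n * K - (n - 1) * y) * (y ^ n / y) := by
    simp only [id]; field_simp; ring
  rw [e]
  exact mul_neg_of_neg_of_pos (by linarith) (by positivity)

/-! ### The threshold `z_⊕` -/

lemma gz_zzero (hn : 1 < n) (hK : 0 < K) :
    gz n m K z (zzero n K) = (n - m) * z ^ n * ((zzero n K - K) / zzero n K ^ n) := by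
  have h0 := zzero_pos hn hK
  have h1 := zzero_mul (K := K) hn
  have e : (m - 1) * zzero n K - m * K = -(n - m) * (zzero n K - K) := by linarith
  rw [gz, phi_zzero hn, phi, e, Real.rpow_neg h0.le]; ring

lemma gz_root (hn : 1 < n) (hm : m < 0) (hb : 0 < beta) (hb2 : beta < 1) (hz0 : 0 < z)
    {a : ℝ} (ha : 0 < a) (hF : Ffun n m beta K z a = 0) :
    gz n m K z a = (n - m) * z ^ n *
      ((a - K) / (Acoef n m beta * a ^ n + Bcoef n m beta z * a ^ m)) := by
  have hA := Acoef_pos hn hm hb hb2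
  have hB := Bcoef_pos hn hm hb hz0
  have hAB := A_add_B hn hm hb hz0
  have hn' := Real.rpow_pos_of_pos ha n
  have hm' := Real.rpow_pos_of_pos ha m
  unfold Ffun at hF
  rw [Real.rpow_sub ha] at hF
  unfold gz phi
  rw [Real.rpow_neg ha.le, Real.rpow_neg ha.le]
  generalize Acoef n m beta = A at *
  generalize Bcoef n m beta z = B at *
  generalize a ^ n = an at *
  generalize a ^ m = am at *
  generalize z ^ n = zn at *
  generalize z ^ m = zm at *
  have hD : A * an + B * am ≠ 0 := by positivity
  have hF' : ((n - 1) * a - n * K) * A * an + ((m - 1) * a - m * K) * B * am = 0 := by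
    field_simp at hF; linarith
  -- Both linear factors are multiples of `u = (a - K) / (A a ^ n + B a ^ m)`.
  have hP : (n - 1) * a - n * K = (n - m) * B * am * ((a - K) / (A * an + B * am)) := by
    field_simp; linear_combination hF'
  have hQ : (m - 1) * a - m * K = -(n - m) * A * an * ((a - K) / (A * an + B * am)) := by
    field_simp; linear_combination hF'
  rw [hP, hQ]
  generalize (a - K) / (A * an + B * am) = u
  field_simp
  linear_combination (n - m) * u * hAB

/-- When `z ≥ 𝔷_0` and the zero `a` of `F(·; z)` lies above `z`, the difference defining `z_⊕` is
negative exactly when `g_z(a) < g_z(𝔷_0)`. -/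
lemma diff_iff (hn : 1 < n) (hm : m < 0) (hK : 0 < K) (hb : 0 < beta) (hb2 : beta < 1)
    (hz0 : zzero n K ≤ z) {a : ℝ} (ha : z < a) (hF : Ffun n m beta K z a = 0) :
    (a - K) / psi n m beta z a - (zzero n K - K) / psi n m beta z (zzero n K) < 0 ↔
      gz n m K z a < gz n m K z (zzero n K) := by
  have hzp := (zzero_pos hn hK).trans_le hz0
  have hc : 0 < (n - m) * z ^ n := mul_pos (by linarith) (Real.rpow_pos_of_pos hzp n)
  rw [gz_root hn hm hb hb2 hzp (hzp.trans ha) hF, gz_zzero hn hK, mul_lt_mul_iff_right₀ hc,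
    sub_neg, psi, psi, if_neg (not_le.2 ha), if_pos hz0]

/-- The difference defining `z_⊕` is negative at `z` once some `y > z` satisfies the strict
inequalities `F(y; z) > 0` and `g_z(y) < g_z(𝔷_0)`. These are open conditions on `z` for fixed `y`,
so no continuity of `α` is needed. -/
lemma diff_neg (hn : 1 < n) (hm : m < 0) (hK : 0 < K) (hb : 0 < beta) (hb2 : beta < 1)
    (hz0 : zzero n K < z) {a : ℝ} (ha : zzero n K < a) (hF : Ffun n m beta K z a = 0)
    {y : ℝ} (hy : z < y) (hFy : 0 < hFun n m beta K z y)
    (hg : gz n m K z y < gz n m K z (zzero n K)) :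
    (a - K) / psi n m beta z a - (zzero n K - K) / psi n m beta z (zzero n K) < 0 := by
  have h0 := zzero_pos hn hK
  rcases le_or_gt a z with haz | haz
  · rw [psi, psi, if_pos haz, if_pos hz0.le, sub_neg]
    exact div_rpow_strictAntiOn hn hK self_mem_Ici ha.le ha
  · rw [diff_iff hn hm hK hb hb2 hz0.le haz hF]
    have hay : a < y := by
      rw [← hFun_eq_zero (h0.trans ha) hF] at hFy
      exact (hFun_strictMonoOn hn hm hK hb hb2 (h0.trans hz0)).lt_iff_lt ha.le
        (hz0.trans hy).le |>.1 hFy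
    exact (gz_strictMonoOn hn hm hK hz0.le haz.le hy.le hay).trans hg

/-! ### The curve `G = 0` -/

/-- `H(z, z; z) < 0`. -/
lemma hFun_diag (hn : 1 < n) (hm : m < 0) (hb : 0 < beta) (hz0 : 0 < z) :
    hFun n m beta K z z - (1 - beta) / (1 + beta) * phi K n m z < 0 := by
  have h1 : 0 < n - m := by linarith
  have h2 : 0 < 1 + beta := by linarith
  have e : hFun n m beta K z z - (1 - beta) / (1 + beta) * phi K n m z
      = -(2 * beta * z / (1 + beta) * z ^ (-m)) := by
    have h3 : z ^ (n - m) * z ^ (-n) = z ^ (-m) := by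
      rw [← Real.rpow_add hz0]; congr 1; ring
    have h4 : Bcoef n m beta z * phi K m n z
        = 2 * n * beta / ((n - m) * (1 + beta)) * ((m - 1) * z - m * K) * z ^ (-m) := by
      rw [← h3]; unfold Bcoef phi; ring
    rw [hFun, h4]; unfold Acoef phi
    field_simp; ring
  rw [e, neg_lt_zero]
  have := Real.rpow_pos_of_pos hz0 (-m)
  positivity

/-- The `ζ₀ > z` with `g_z(ζ₀) = g_z(𝔷_0)`. -/
lemma exists_zeta0 (hn : 1 < n) (hm : m < 0) (hK : 0 < K) (hz0 : zzero n K < z) :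
    ∃ y, z < y ∧ gz n m K z y = gz n m K z (zzero n K) := by
  have h0 := zzero_pos hn hK
  have hzp := h0.trans hz0
  have hKz := (lt_zzero hn hK).trans hz0
  have hn1 : 0 < n - 1 := by linarith
  set Y := z + |gz n m K z (zzero n K)| / (n - 1) with hY
  have hzY : z ≤ Y := by
    have : 0 ≤ |gz n m K z (zzero n K)| / (n - 1) := by positivity
    linarith
  have hYp : 0 < Y := hzp.trans_le hzY
  have hbig : gz n m K z (zzero n K) ≤ gz n m K z Y := by
    have h1 : gz n m K z (zzero n K) ≤ (n - 1) * Y - n * K := by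
      have : (n - 1) * Y = (n - 1) * z + |gz n m K z (zzero n K)| := by
        rw [hY]; field_simp
      have h2 := le_abs_self (gz n m K z (zzero n K))
      have h3 := zzero_mul (K := K) hn
      nlinarith
    have hp : 0 ≤ (n - 1) * Y - n * K := by
      have h3 := zzero_mul (K := K) hn
      nlinarith
    have h2 : 1 ≤ z ^ m * Y ^ (-m) := by
      rw [rpow_mul_rpow_neg hzp hYp]
      exact Real.one_le_rpow_of_pos_of_le_one_of_nonpos (div_pos hzp hYp)
        ((div_le_one hYp).2 hzY) hm.le
    have h3 : 0 ≤ -((m - 1) * Y - m * K) := by nlinarith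
    have h4 : 0 < z ^ n * Y ^ (-n) :=
      mul_pos (Real.rpow_pos_of_pos hzp _) (Real.rpow_pos_of_pos hYp _)
    have e : gz n m K z Y = ((n - 1) * Y - n * K) * (z ^ m * Y ^ (-m))
        + -((m - 1) * Y - m * K) * (z ^ n * Y ^ (-n)) := by
      unfold gz phi; ring
    rw [e]
    have h5 := mul_nonneg h3 h4.le
    have h6 := mul_le_mul_of_nonneg_left h2 hp
    linarith
  have hlow : gz n m K z z < gz n m K z (zzero n K) :=
    gz_strictAntiOn hn hm hK ⟨le_rfl, hz0.le⟩ ⟨hz0.le, le_rfl⟩ hz0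
  obtain ⟨y, hy, hgy⟩ := intermediate_value_Icc hzY
    ((continuousOn_gz n m K z).mono fun y hy => hzp.trans_le hy.1) ⟨hlow.le, hbig⟩
  refine ⟨y, lt_of_le_of_ne hy.1 ?_, hgy⟩
  rintro rfl
  exact hlow.ne hgy

/-- Intermediate value theorem along the curve `g x = g y`, with `g` decreasing on `[a, z]` and
increasing on `[z, b]`. The inverse of `g` on `[a, z]` is not needed: the closed sets of `y ∈ [z, b]`
above which the curve meets `{H ≤ 0}` and `{H ≥ 0}` cover `[z, b]`, hence they intersect. -/
lemma exists_on_curve {g h k : ℝ → ℝ} {a z b : ℝ} (haz : a ≤ z) (hzb : z ≤ b)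
    (hg : ContinuousOn g (Icc a b)) (hh : ContinuousOn h (Icc z b))
    (hk : ContinuousOn k (Icc a z)) (hanti : StrictAntiOn g (Icc a z))
    (hmono : StrictMonoOn g (Icc z b)) (hab : g a = g b)
    (hdiag : h z - k z < 0) (hend : 0 < h b - k a) :
    ∃ x y, x ∈ Ioo a z ∧ y ∈ Ioo z b ∧ g x = g y ∧ h y - k x = 0 := by
  have hga : ContinuousOn g (Icc a z) := hg.mono (Icc_subset_Icc_right hzb)
  have hgb : ContinuousOn g (Icc z b) := hg.mono (Icc_subset_Icc_left haz)
  have hfst : MapsTo Prod.fst (Icc a z ×ˢ Icc z b) (Icc a z) := fun p hp => hp.1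
  have hsnd : MapsTo Prod.snd (Icc a z ×ˢ Icc z b) (Icc z b) := fun p hp => hp.2
  have hE : ContinuousOn (fun p : ℝ × ℝ => (g p.1 - g p.2, h p.2 - k p.1))
      (Icc a z ×ˢ Icc z b) :=
    ((hga.comp continuousOn_fst hfst).sub (hgb.comp continuousOn_snd hsnd)).prodMk
      ((hh.comp continuousOn_snd hsnd).sub (hk.comp continuousOn_fst hfst))
  have hcl : ∀ T : Set ℝ, IsClosed T →
      IsClosed (Prod.snd '' ((Icc a z ×ˢ Icc z b) ∩
        (fun p : ℝ × ℝ => (g p.1 - g p.2, h p.2 - k p.1)) ⁻¹' ({0} ×ˢ T))) := by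
    intro T hT
    refine IsCompact.isClosed (IsCompact.image ?_ continuous_snd)
    exact (isCompact_Icc.prod isCompact_Icc).of_isClosed_subset
      (hE.preimage_isClosed_of_isClosed (isClosed_Icc.prod isClosed_Icc)
        (isClosed_singleton.prod hT)) inter_subset_left
  have hpre := isPreconnected_closed_iff.1 (isPreconnected_Icc (a := z) (b := b)) _ _
    (hcl (Iic 0) isClosed_Iic) (hcl (Ici 0) isClosed_Ici)
    (by
      intro y hy
      have h1 : g y ∈ Icc (g z) (g a) :=
        ⟨hmono.monotoneOn ⟨le_rfl, hzb⟩ hy hy.1,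
          hab ▸ hmono.monotoneOn hy ⟨hzb, le_rfl⟩ hy.2⟩
      obtain ⟨x, hx, hxy⟩ := intermediate_value_Icc' haz hga h1
      rcases le_total (h y - k x) 0 with hs | hs
      · exact Or.inl ⟨(x, y), ⟨⟨hx, hy⟩, ⟨sub_eq_zero.2 hxy, hs⟩⟩, rfl⟩
      · exact Or.inr ⟨(x, y), ⟨⟨hx, hy⟩, ⟨sub_eq_zero.2 hxy, hs⟩⟩, rfl⟩)
    ⟨z, ⟨le_rfl, hzb⟩, (z, z), ⟨⟨⟨haz, le_rfl⟩, ⟨le_rfl, hzb⟩⟩, ⟨sub_self _, hdiag.le⟩⟩, rfl⟩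
    ⟨b, ⟨hzb, le_rfl⟩, (a, b), ⟨⟨⟨le_rfl, haz⟩, ⟨hzb, le_rfl⟩⟩,
      ⟨sub_eq_zero.2 hab, hend.le⟩⟩, rfl⟩
  obtain ⟨y, hy, ⟨⟨x, y₁⟩, ⟨⟨hx, -⟩, ⟨hgx, hHx⟩⟩, hy₁⟩, ⟨⟨x', y₂⟩, ⟨⟨hx', -⟩, ⟨hgx', hHx'⟩⟩, hy₂⟩⟩ := hpre
  simp only at hx hx' hy₁ hy₂ hgx hgx' hHx hHx'
  subst hy₁ hy₂
  have hgx := sub_eq_zero.1 hgx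
  have hgx' := sub_eq_zero.1 hgx'
  obtain rfl : x = x' := hanti.injOn hx hx' (hgx.trans hgx'.symm)
  have hH : h y₂ - k x = 0 := le_antisymm hHx hHx'
  -- If `x` or `y` were an end point of its interval, `(x, y)` would be an end of the curve, where
  -- `H` has a strict sign.
  have hxa : x ≠ a := by
    rintro rfl
    obtain rfl := hmono.injOn hy ⟨hzb, le_rfl⟩ (hgx.symm.trans hab)
    exact hend.ne' hH
  have hyz : y₂ ≠ z := by
    rintro rfl
    obtain rfl := hanti.injOn hx ⟨haz, le_rfl⟩ hgx
    exact hdiag.ne hH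
  have hxz : x ≠ z := by
    rintro rfl
    exact hyz (hmono.injOn hy ⟨le_rfl, hzb⟩ hgx.symm)
  have hyb : y₂ ≠ b := by
    rintro rfl
    exact hxa (hanti.injOn hx ⟨le_rfl, haz⟩ (hgx.trans hab.symm))
  exact ⟨x, y₂, ⟨lt_of_le_of_ne hx.1 hxa.symm, lt_of_le_of_ne hx.2 hxz⟩,
    ⟨lt_of_le_of_ne hy.1 hyz.symm, lt_of_le_of_ne hy.2 hyb⟩, hgx, hH⟩

end

/-! ### Existence and uniqueness of the solution -/

lemma one_lt_root {sigma b r n : ℝ} (hsigma : sigma ≠ 0) (hr : 0 < r) (hbr : b < r) (hn : 0 < n)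
    (h : 1 / 2 * sigma ^ 2 * n ^ 2 + (b - 1 / 2 * sigma ^ 2) * n - r = 0) : 1 < n := by
  by_contra! hn1
  have hs : 0 < sigma ^ 2 := by positivity
  have h1 : 0 ≤ sigma ^ 2 * (n * (1 - n)) := mul_nonneg hs.le (mul_nonneg hn.le (by linarith))
  have h2 : b * n < r * n := mul_lt_mul_of_pos_right hbr hn
  nlinarith

theorem stmt_18 (sigma b r K beta n m : ℝ)
    (hsigma : sigma ≠ 0) (hr : 0 < r) (hbr : b < r) (hK : 0 < K)
    (hb1 : -1 < beta) (hb2 : beta < 1) (hbne : beta ≠ 0)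
    (hm : m < 0) (hn : 0 < n)
    (hmroot : 1 / 2 * sigma ^ 2 * m ^ 2 + (b - 1 / 2 * sigma ^ 2) * m - r = 0)
    (hnroot : 1 / 2 * sigma ^ 2 * n ^ 2 + (b - 1 / 2 * sigma ^ 2) * n - r = 0)
    (hbpos : 0 < beta)
    (alpha : ℝ → ℝ)
    (halpha : ∀ z, 0 < z →
      alpha z ∈ Set.Ioi (min z (zzero n K)) ∧ Ffun n m beta K z (alpha z) = 0 ∧
      (∀ x ∈ Set.Ioi (min z (zzero n K)), Ffun n m beta K z x = 0 → x = alpha z))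
    (zp : ℝ)
    (hzp1 : zzero n K < zp)
    (hzp2 : ∀ z ∈ Set.Ioo (0 : ℝ) zp,
      0 < (alpha z - K) / psi n m beta z (alpha z)
        - (zzero n K - K) / psi n m beta z (zzero n K))
    (hzp3 : ∀ z, zp < z →
      (alpha z - K) / psi n m beta z (alpha z)
        - (zzero n K - K) / psi n m beta z (zzero n K) < 0) :
    ∀ z, 0 < z →
      ((∃ ga zeta : ℝ, zzero n K < ga ∧ ga < z ∧ z < zeta ∧
          Gfun n m K z ga zeta = 0 ∧ Hfun n m beta K z ga zeta = 0) ↔ zp < z) ∧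
      (zp < z → ∃! gz : ℝ × ℝ, zzero n K < gz.1 ∧ gz.1 < z ∧ z < gz.2 ∧
          Gfun n m K z gz.1 gz.2 = 0 ∧ Hfun n m beta K z gz.1 gz.2 = 0) := by
  have hn1 : 1 < n := one_lt_root hsigma hr hbr hn hnroot
  have h0 := zzero_pos hn1 hK
  have hc : 0 < (1 - beta) / (1 + beta) := div_pos (by linarith) (by linarith)
  have hphi := phi_strictMonoOn hn1 hm hK
  have halpha' : ∀ z, zzero n K < z → zzero n K < alpha z := fun z hz => by
    have := (halpha z (h0.trans hz)).1
    rwa [min_eq_right hz.le] at this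
  intro z hz
  have hsys : ∀ x y, zzero n K < x → x < z → z < y →
      ((Gfun n m K z x y = 0 ∧ Hfun n m beta K z x y = 0) ↔
        (gz n m K z x = gz n m K z y ∧
          hFun n m beta K z y - (1 - beta) / (1 + beta) * phi K n m x = 0)) := fun x y _ _ hy => by
    rw [Gfun_eq, Hfun_eq (hz.trans hy), sub_eq_zero, eq_comm]
  have hex : zp < z → ∃ ga zeta : ℝ, zzero n K < ga ∧ ga < z ∧ z < zeta ∧
      Gfun n m K z ga zeta = 0 ∧ Hfun n m beta K z ga zeta = 0 := by
    intro hzz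
    have hz0 : zzero n K < z := hzp1.trans hzz
    obtain ⟨y0, hy0, hgy0⟩ := exists_zeta0 hn1 hm hK hz0
    have hF := (halpha z hz).2.1
    have ha := halpha' z hz0
    have hay : alpha z < y0 := by
      rcases le_or_gt (alpha z) z with haz | haz
      · exact haz.trans_lt hy0
      · have := (diff_iff hn1 hm hK hbpos hb2 hz0.le haz hF).1 (hzp3 z hzz)
        rw [← hgy0] at this
        exact ((gz_strictMonoOn hn1 hm hK hz0.le).lt_iff_lt haz.le hy0.le).1 this
    have hpos : 0 < hFun n m beta K z y0 := by
      rw [← hFun_eq_zero (h0.trans ha) hF]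
      exact hFun_strictMonoOn hn1 hm hK hbpos hb2 hz ha.le (hz0.trans hy0).le hay
    obtain ⟨x, y, hx, hy, hgxy, hH⟩ := exists_on_curve (g := gz n m K z) (h := hFun n m beta K z)
      (k := fun x => (1 - beta) / (1 + beta) * phi K n m x) hz0.le hy0.le
      ((continuousOn_gz n m K z).mono fun y hy => h0.trans_le hy.1)
      ((((continuousOn_phi K n m).const_mul _).add ((continuousOn_phi K m n).const_mul _)).mono
        fun y hy => hz.trans_le hy.1)
      (((continuousOn_phi K n m).const_mul _).mono fun y hy => h0.trans_le hy.1)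
      (gz_strictAntiOn hn1 hm hK)
      ((gz_strictMonoOn hn1 hm hK hz0.le).mono fun y hy => hy.1) hgy0.symm
      (hFun_diag hn1 hm hbpos hz) (by simpa [phi_zzero hn1] using hpos)
    exact ⟨x, y, hx.1, hx.2, hy.1, (hsys x y hx.1 hx.2 hy.1).2 ⟨hgxy, hH⟩⟩
  refine ⟨⟨?_, hex⟩, fun hzz => ?_⟩
  · rintro ⟨x, y, hx, hxz, hzy, hGH⟩
    obtain ⟨hG, hH⟩ := (hsys x y hx hxz hzy).1 hGH
    have hz0 : zzero n K < z := hx.trans hxz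
    have hpos : 0 < hFun n m beta K z y := by
      have h1 : 0 < phi K n m x := by
        rw [← phi_zzero (K := K) (m := m) hn1]
        exact hphi self_mem_Ici hx.le hx
      have h2 := mul_pos hc h1
      linarith
    have hlt : gz n m K z y < gz n m K z (zzero n K) := by
      rw [← hG]
      exact gz_strictAntiOn hn1 hm hK ⟨le_rfl, hz0.le⟩ ⟨hx.le, hxz.le⟩ hx
    by_contra! hle
    have hrp : ∀ p : ℝ, ContinuousAt (fun w : ℝ => w ^ p) z := fun p =>
      Real.continuousAt_rpow_const z p (Or.inl hz.ne')
    have c1 : ContinuousAt (fun w => hFun n m beta K w y) z := by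
      unfold hFun Bcoef
      exact continuousAt_const.add
        (((continuousAt_const.mul (hrp _)).div_const _).mul continuousAt_const)
    have c2 : ∀ v, ContinuousAt (fun w => gz n m K w v) z := fun v =>
      ((hrp m).mul continuousAt_const).sub ((hrp n).mul continuousAt_const)
    have ev : ∀ᶠ w in 𝓝 z, 0 < hFun n m beta K w y ∧
        gz n m K w y < gz n m K w (zzero n K) ∧ zzero n K < w :=
      (c1.eventually_const_lt hpos).and
        (((c2 y).eventually_lt (c2 _) hlt).and (eventually_gt_nhds hz0))
    obtain ⟨w, ⟨hw1, hw2, hw3⟩, hwz⟩ :=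
      ((ev.filter_mono nhdsWithin_le_nhds).and (self_mem_nhdsWithin (s := Iio z))).exists
    have hwz : w < z := hwz
    have hwp := h0.trans hw3
    have hneg := diff_neg hn1 hm hK hbpos hb2 hw3 (halpha' w hw3) (halpha w hwp).2.1
      (hwz.trans hzy) hw1 hw2
    exact (hzp2 w ⟨hwp, hwz.trans_le hle⟩).not_gt hneg
  · obtain ⟨x, y, hx, hxz, hzy, hGH⟩ := hex hzz
    have hz0 : zzero n K < z := hx.trans hxz
    have hanti := gz_strictAntiOn (z := z) hn1 hm hK
    have hmono := gz_strictMonoOn hn1 hm hK hz0.le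
    have hhz := hFun_strictMonoOn hn1 hm hK hbpos hb2 hz
    -- Two solutions cannot have different first coordinates.
    have key : ∀ x y x' y', zzero n K < x → x < z → z < y → zzero n K < x' → x' < z → z < y' →
        (Gfun n m K z x y = 0 ∧ Hfun n m beta K z x y = 0) →
        (Gfun n m K z x' y' = 0 ∧ Hfun n m beta K z x' y' = 0) → ¬ x < x' := by
      intro x y x' y' hx hxz hzy hx' hxz' hzy' hS hS' hlt
      obtain ⟨hG, hH⟩ := (hsys x y hx hxz hzy).1 hS
      obtain ⟨hG', hH'⟩ := (hsys x' y' hx' hxz' hzy').1 hS'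
      have h1 : gz n m K z y' < gz n m K z y := by
        rw [← hG, ← hG']; exact hanti ⟨hx.le, hxz.le⟩ ⟨hx'.le, hxz'.le⟩ hlt
      have h2 : y' < y := (hmono.lt_iff_lt hzy'.le hzy.le).1 h1
      have h3 := hhz (hz0.trans hzy').le (hz0.trans hzy).le h2
      have h4 := mul_lt_mul_of_pos_left (hphi hx.le hx'.le hlt) hc
      linarith
    refine ⟨(x, y), ⟨hx, hxz, hzy, hGH⟩, ?_⟩
    rintro ⟨x', y'⟩ ⟨hx', hxz', hzy', hGH'⟩
    simp only at hx' hxz' hzy' hGH'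
    obtain rfl : x' = x := le_antisymm
      (not_lt.1 (key x y x' y' hx hxz hzy hx' hxz' hzy' hGH hGH'))
      (not_lt.1 (key x' y' x y hx' hxz' hzy' hx hxz hzy hGH' hGH))
    have hG := ((hsys x' y hx hxz hzy).1 hGH).1
    have hG' := ((hsys x' y' hx' hxz' hzy').1 hGH').1
    rw [hmono.injOn hzy'.le hzy.le (hG'.symm.trans hG)]
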